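/- Let G be a connected undirected unweighted graph on vertex set V of n nodes, and for v ∈ V let ecc(v) := max_{u ∈ V} dist(v,u) denote the eccentricity of v. Let 0 < ε ≤ 1 and let d̃ : V×V → ℝ be a (1+ε)-approximation of the distances of G. For each v ∈ V let N(v) be a set of ⌈√n⌉ nodes u with the smallest values d̃(v,u). Let S ⊆ V satisfy S ∩ N(v) ≠ ∅ for every v ∈ V, let w ∈ V be a node maximizing d̃(w,S), and let W := N(w). Define ecc̃(s) := max_{v ∈ V} d̃(s,v) for s ∈ S ∪ W ∪ {w}, and for every other node v define ecc̃(v) := max_{s ∈ S ∪ W ∪ {w}} max{ d̃(s,v), ecc̃(s) − d̃(s,v) }. Then for every v ∈ V: ((3 − 6ε)/5)·ecc(v) − 4/7 ≤ ecc̃(v) ≤ (1 + 2ε)·ecc(v). -/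

import Mathlib

/-!
The upper bound is the triangle inequality `ecc s ≤ ecc v + dist s v` combined with the
approximation factor.

The lower bound is immediate at nodes of `A = S ∪ W ∪ {w}`. Otherwise let
`D = ecc v = dist v t`, let `E` be the estimate at `v ∉ A`, and let `r = d̃(w, S)`.
* Since `w` is farthest from `S`, some `s ∈ S` has `dist t s ≤ r`, whence
  `E ≥ dist s v ≥ D - r`, that is, `r ≥ D - E`.
* Since `S` meets `W`, every `x` with `d̃(w, x) < r` lies in `W`. So the node `x` at distance `i`
  from `w` on a shortest path to `v`, with `i` the largest integer such that `(1 + ε) i < r`,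
  lies in `W`, and `dist x v ≤ dist w v - i ≤ E - i`.
* Finally `E ≥ ecc x - d̃(x, v) ≥ D - (2 + ε) dist x v`.

Together these give `(5 + 5ε + ε²) E ≥ (3 + 2ε) D - (1 + ε)(2 + ε)`, which is stronger than the
claim for `0 ≤ ε ≤ 1` and `D ≥ 0`.

The metric facts come from `dR_le_of_hasWalk` and `exists_hasWalk_eq_dR`, which say that `dR` is
the least length of a walk.
-/

open scoped BigOperators Classical ENNReal

/-- `p` is a walk with `k` edges (hops) in the graph whose adjacency relation is `Adj`. -/
def IsWalk {V : Type*} (Adj : V → V → Prop) (k : ℕ) (p : Fin (k + 1) → V) : Prop :=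
  ∀ i : Fin k, Adj (p i.castSucc) (p i.succ)

/-- The number of edges of the walk `p` with `k` edges (all edges have weight `1`). -/
noncomputable def walkCost {V : Type*} (c : V → V → ℝ≥0∞) (k : ℕ) (p : Fin (k + 1) → V) :
    ℝ≥0∞ :=
  ∑ i : Fin k, c (p i.castSucc) (p i.succ)

/-- The shortest-path distance from `u` to `v` in the graph given by `Adj` with edge
weights `c` (it is `⊤` if there is no walk from `u` to `v`). -/
noncomputable def gdist {V : Type*} (Adj : V → V → Prop) (c : V → V → ℝ≥0∞) (u v : V) :
    ℝ≥0∞ :=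
  ⨅ (k : ℕ) (p : {p : Fin (k + 1) → V //
      p 0 = u ∧ p (Fin.last k) = v ∧ IsWalk Adj k p}), walkCost c k p.1

/-- The (unweighted) shortest-path distance as a real number. -/
noncomputable def dR {V : Type*} (Adj : V → V → Prop) (u v : V) : ℝ :=
  (gdist Adj (fun _ _ => (1 : ℝ≥0∞)) u v).toReal

/-- The eccentricity of `v`: the largest distance from `v` to any other node. -/
noncomputable def eccR {V : Type*} [Fintype V] [Nonempty V] (Adj : V → V → Prop) (v : V) :
    ℝ :=
  Finset.univ.sup' Finset.univ_nonempty (fun u => dR Adj v u)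

/-- There is a walk with `k` edges from `u` to `v`. The vertices are given by a function on `ℕ`,
whose values beyond `k` are irrelevant; this makes cutting and concatenating walks easy. -/
def HasWalk {V : Type*} (Adj : V → V → Prop) (k : ℕ) (u v : V) : Prop :=
  ∃ f : ℕ → V, f 0 = u ∧ f k = v ∧ ∀ i < k, Adj (f i) (f (i + 1))

lemma HasWalk.append {V : Type*} {Adj : V → V → Prop} {k l : ℕ} {u v x : V}
    (h₁ : HasWalk Adj k u v) (h₂ : HasWalk Adj l v x) : HasWalk Adj (k + l) u x := by
  obtain ⟨f, f0, fk, hf⟩ := h₁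
  obtain ⟨g, g0, gl, hg⟩ := h₂
  refine ⟨fun i => if i < k then f i else g (i - k), ?_, by simp [gl], ?_⟩
  · rcases Nat.eq_zero_or_pos k with rfl | hk
    · simp [g0, ← fk, f0]
    · simp [hk, f0]
  · intro i hi
    rcases lt_trichotomy (i + 1) k with h | h | h
    · simp only [h, if_true, show i < k by omega]
      exact hf i (by omega)
    · simp only [h, lt_irrefl, if_false, show i < k by omega, if_true, Nat.sub_self, g0, ← fk]
      simpa only [h] using hf i (by omega)
    · simp only [show ¬ i + 1 < k by omega, if_false, show ¬ i < k by omega,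
        show i + 1 - k = i - k + 1 by omega]
      exact hg (i - k) (by omega)

lemma HasWalk.reverse {V : Type*} {Adj : V → V → Prop} (hsym : ∀ u v : V, Adj u v → Adj v u)
    {k : ℕ} {u v : V} (h : HasWalk Adj k u v) : HasWalk Adj k v u := by
  obtain ⟨f, f0, fk, hf⟩ := h
  refine ⟨fun i => f (k - i), by simpa using fk, by simpa using f0, fun i hi => ?_⟩
  have := hf (k - (i + 1)) (by omega)
  rw [show k - (i + 1) + 1 = k - i by omega] at this
  exact hsym _ _ this

/-- A walk of length `k` can be cut after any `i ≤ k` edges. -/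
lemma HasWalk.split {V : Type*} {Adj : V → V → Prop} {k i : ℕ} (hik : i ≤ k) {u v : V}
    (h : HasWalk Adj k u v) : ∃ x, HasWalk Adj i u x ∧ HasWalk Adj (k - i) x v := by
  obtain ⟨f, f0, fk, hf⟩ := h
  refine ⟨f i, ⟨f, f0, rfl, fun j hj => hf j (by omega)⟩,
    ⟨fun j => f (i + j), rfl, ?_, fun j hj => hf (i + j) (by omega)⟩⟩
  simpa [Nat.add_sub_cancel' hik] using fk

lemma walkCost_one {V : Type*} (k : ℕ) (p : Fin (k + 1) → V) :
    walkCost (fun _ _ => (1 : ℝ≥0∞)) k p = k := by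
  simp [walkCost]

lemma dR_le_of_hasWalk {V : Type*} {Adj : V → V → Prop} {k : ℕ} {u v : V}
    (h : HasWalk Adj k u v) : dR Adj u v ≤ k := by
  obtain ⟨f, f0, fk, hf⟩ := h
  have h : gdist Adj (fun _ _ => (1 : ℝ≥0∞)) u v ≤ k := by
    refine (iInf₂_le k ⟨fun i => f i, ?_, ?_, ?_⟩).trans (walkCost_one _ _).le
    · simpa using f0
    · simpa using fk
    · intro i
      simpa using hf i i.2
  simpa [dR] using ENNReal.toReal_mono (ENNReal.natCast_ne_top k) h

/-- In a connected graph the distance is attained by a walk: the infimum defining it runs over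
natural numbers. -/
lemma exists_hasWalk_eq_dR {V : Type*} {Adj : V → V → Prop} {u v : V}
    (hconn : gdist Adj (fun _ _ => (1 : ℝ≥0∞)) u v ≠ ⊤) :
    ∃ k : ℕ, HasWalk Adj k u v ∧ dR Adj u v = k := by
  have toWalk : ∀ k (p : {p : Fin (k + 1) → V // p 0 = u ∧ p (Fin.last k) = v ∧ IsWalk Adj k p}),
      HasWalk Adj k u v := by
    rintro k ⟨p, p0, pk, hp⟩
    refine ⟨fun i => if h : i < k + 1 then p ⟨i, h⟩ else u, ?_, ?_, fun i hi => ?_⟩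
    · simpa using p0
    · simpa [Fin.last] using pk
    · have := hp ⟨i, hi⟩
      simpa [show i < k + 1 by omega, hi] using this
  have hex : ∃ k, HasWalk Adj k u v := by
    by_contra! hno
    apply hconn
    simp only [gdist, iInf_eq_top]
    exact fun k p => (hno k (toWalk k p)).elim
  refine ⟨Nat.find hex, Nat.find_spec hex,
    le_antisymm (dR_le_of_hasWalk (Nat.find_spec hex)) ?_⟩
  have h : ((Nat.find hex : ℕ) : ℝ≥0∞) ≤ gdist Adj (fun _ _ => (1 : ℝ≥0∞)) u v := by
    refine le_iInf₂ fun k p => ?_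
    rw [walkCost_one]
    exact_mod_cast Nat.find_min' hex (toWalk k p)
  simpa [dR] using ENNReal.toReal_mono hconn h

lemma dR_nonneg {V : Type*} (Adj : V → V → Prop) (u v : V) : 0 ≤ dR Adj u v :=
  ENNReal.toReal_nonneg

lemma dR_triangle {V : Type*} {Adj : V → V → Prop}
    (hconn : ∀ u v : V, gdist Adj (fun _ _ => (1 : ℝ≥0∞)) u v ≠ ⊤) (u v x : V) :
    dR Adj u x ≤ dR Adj u v + dR Adj v x := by
  obtain ⟨k, hk, ek⟩ := exists_hasWalk_eq_dR (hconn u v)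
  obtain ⟨l, hl, el⟩ := exists_hasWalk_eq_dR (hconn v x)
  rw [ek, el]
  exact_mod_cast dR_le_of_hasWalk (hk.append hl)

lemma dR_comm {V : Type*} {Adj : V → V → Prop} (hsym : ∀ u v : V, Adj u v → Adj v u)
    (hconn : ∀ u v : V, gdist Adj (fun _ _ => (1 : ℝ≥0∞)) u v ≠ ⊤) (u v : V) :
    dR Adj u v = dR Adj v u := by
  have key : ∀ a b : V, dR Adj a b ≤ dR Adj b a := fun a b => by
    obtain ⟨k, hk, ek⟩ := exists_hasWalk_eq_dR (hconn b a)
    exact ek ▸ dR_le_of_hasWalk (hk.reverse hsym)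
  exact le_antisymm (key u v) (key v u)

lemma dR_le_eccR {V : Type*} [Fintype V] [Nonempty V] (Adj : V → V → Prop) (v u : V) :
    dR Adj v u ≤ eccR Adj v :=
  Finset.le_sup' (fun u => dR Adj v u) (Finset.mem_univ u)

/-- The arithmetic of the lower bound, with `r` the approximate distance from `w` to `S`, `i` the
position of `x` on the path from `w` to `v`, and `y` the distance from `x` to `v`. -/
lemma lower_bound_arith {ε D E r i y : ℝ} (hε0 : 0 < ε) (hε1 : ε ≤ 1) (hD : 0 ≤ D)
    (hr : D - E ≤ r) (hi : r ≤ (1 + ε) * (i + 1)) (hy : y ≤ E - i)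
    (hE : D - (2 + ε) * y ≤ E) :
    (3 - 6 * ε) / 5 * D - 4 / 7 ≤ E := by
  have h1 : D - (2 + ε) * (E - i) ≤ E := by nlinarith
  have h2 : (3 + 2 * ε) * D - (1 + ε) * (2 + ε) ≤ (5 + 5 * ε + ε ^ 2) * E := by
    have a := mul_le_mul_of_nonneg_left h1 (by linarith : 0 ≤ 1 + ε)
    have b := mul_le_mul_of_nonneg_left (hr.trans hi) (by linarith : 0 ≤ 2 + ε)
    linarith
  have hq : 0 < 5 + 5 * ε + ε ^ 2 := by positivity
  have h3 : (5 + 5 * ε + ε ^ 2) * ((3 - 6 * ε) / 5) ≤ 3 + 2 * ε := by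
    nlinarith [pow_pos hε0 2, pow_pos hε0 3]
  have h4 : (1 + ε) * (2 + ε) ≤ (5 + 5 * ε + ε ^ 2) * (4 / 7) := by nlinarith
  have h5 := mul_le_mul_of_nonneg_right h3 hD
  refine le_of_mul_le_mul_left ?_ hq
  linarith

/-- **Approximate eccentricities from approximate distances (Lemma E.3).**
`G` is a connected undirected unweighted graph; `d̃` is a `(1+ε)`-approximation of its
distances; `N v` consists of `⌈√n⌉` nodes with smallest `d̃(v,·)`; `S` intersects every
`N v`; `w` maximizes `d̃(·,S)`; `W = N w`.  With `ẽcc(s) := max_v d̃(s,v)` for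
`s ∈ S ∪ W ∪ {w}` and `ẽcc(v) := max_{s ∈ S ∪ W ∪ {w}} max{d̃(s,v), ẽcc(s) - d̃(s,v)}`
for every other node `v`, one has
`((3-6ε)/5)·ecc(v) - 4/7 ≤ ẽcc(v) ≤ (1+2ε)·ecc(v)` for all `v`. -/
theorem stmt_15 {V : Type*} [Fintype V] [DecidableEq V] [Nonempty V]
    (n : ℕ) (hn : Fintype.card V = n)
    (Adj : V → V → Prop) (hsym : ∀ u v : V, Adj u v → Adj v u)
    (hconn : ∀ u v : V, gdist Adj (fun _ _ => (1 : ℝ≥0∞)) u v ≠ ⊤)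
    (ε : ℝ) (hε0 : 0 < ε) (hε1 : ε ≤ 1)
    (dt : V → V → ℝ)
    (hdt : ∀ u v : V, dR Adj u v ≤ dt u v ∧ dt u v ≤ (1 + ε) * dR Adj u v)
    (N : V → Finset V) (hNcard : ∀ v, (N v).card = ⌈Real.sqrt n⌉₊)
    (hNmin : ∀ v : V, ∀ u ∈ N v, ∀ x : V, x ∉ N v → dt v u ≤ dt v x)
    (S : Finset V) (hSne : S.Nonempty) (hS : ∀ v : V, (S ∩ N v).Nonempty)
    (w : V) (hw : ∀ v : V, S.inf' hSne (fun u => dt v u) ≤ S.inf' hSne (fun u => dt w u))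
    (ecct : V → ℝ)
    (hecc1 : ∀ s2 ∈ insert w (S ∪ N w),
      ecct s2 = Finset.univ.sup' Finset.univ_nonempty (fun v => dt s2 v))
    (hecc2 : ∀ v : V, v ∉ insert w (S ∪ N w) →
      ecct v = (insert w (S ∪ N w)).sup' (Finset.insert_nonempty _ _)
        (fun s2 => max (dt s2 v)
          (Finset.univ.sup' Finset.univ_nonempty (fun u => dt s2 u) - dt s2 v))) :
    ∀ v : V,
      ((3 - 6 * ε) / 5) * eccR Adj v - 4 / 7 ≤ ecct v ∧
        ecct v ≤ (1 + 2 * ε) * eccR Adj v := by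
  intro v
  have tri := dR_triangle hconn
  have comm := dR_comm hsym hconn
  have ecc_nonneg : 0 ≤ eccR Adj v := (dR_nonneg Adj v v).trans (dR_le_eccR Adj v v)
  have le_sup : ∀ s u : V, dt s u ≤ Finset.univ.sup' Finset.univ_nonempty (fun u => dt s u) :=
    fun s u => Finset.le_sup' (fun u => dt s u) (Finset.mem_univ u)
  obtain ⟨t, -, ht⟩ := Finset.exists_mem_eq_sup' Finset.univ_nonempty (fun u => dR Adj v u)
  replace ht : eccR Adj v = dR Adj v t := ht
  by_cases hv : v ∈ insert w (S ∪ N w)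
  · rw [hecc1 v hv]
    constructor
    · have h1 := le_sup v t
      have h2 := (hdt v t).1
      nlinarith
    · refine Finset.sup'_le _ _ fun u _ => ?_
      have h1 := (hdt v u).2
      have h2 := dR_le_eccR Adj v u
      nlinarith
  constructor
  · set E := ecct v with hE
    have hA : ∀ s ∈ insert w (S ∪ N w), dt s v ≤ E ∧ dR Adj v t - (2 + ε) * dR Adj s v ≤ E := by
      intro s hs
      have h := Finset.le_sup' (fun s2 => max (dt s2 v)
          (Finset.univ.sup' Finset.univ_nonempty (fun u => dt s2 u) - dt s2 v)) hs
      rw [← hecc2 v hv, ← hE] at h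
      refine ⟨(le_max_left _ _).trans h, ?_⟩
      have h1 := (le_max_right _ _).trans h
      have h2 := le_sup s t
      have h3 := (hdt s t).1
      have h4 := (hdt s v).2
      have h5 := tri v s t
      rw [comm v s] at h5
      linarith
    set r := S.inf' hSne (fun u => dt w u) with hr
    have hrE : eccR Adj v - E ≤ r := by
      obtain ⟨s, hs, hst⟩ := Finset.exists_mem_eq_inf' hSne (fun u => dt t u)
      have h1 := hw t
      rw [hst] at h1
      have h2 := (hdt t s).1
      have h3 := (hA s (by simp [hs])).1
      have h4 := (hdt s v).1
      have h5 := tri t s v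
      rw [ht, comm v t]
      linarith
    have hNw : ∀ x, x ∉ N w → r ≤ dt w x := by
      intro x hx
      obtain ⟨u, hu⟩ := hS w
      rw [Finset.mem_inter] at hu
      exact (Finset.inf'_le (fun u => dt w u) hu.1).trans (hNmin w u hu.2 x hx)
    -- For `r ≤ 0` there is no node at approximate distance `< r`, but then `E ≥ ecc v`.
    rcases le_or_gt r 0 with hr0 | hr0
    · nlinarith
    obtain ⟨m, hm, em⟩ := exists_hasWalk_eq_dR (hconn w v)
    have hε : 0 < 1 + ε := by linarith
    obtain ⟨i, hi⟩ : ∃ i, ⌈r / (1 + ε)⌉₊ = i + 1 :=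
      Nat.exists_eq_succ_of_ne_zero (Nat.ceil_pos.2 (div_pos hr0 hε)).ne'
    have hi1 : (1 + ε) * i < r := by
      have : (i : ℝ) < r / (1 + ε) := Nat.lt_ceil.1 (by omega)
      rw [lt_div_iff₀ hε] at this
      linarith
    have hi2 : r ≤ (1 + ε) * (i + 1) := by
      have := Nat.le_ceil (r / (1 + ε))
      rw [hi, div_le_iff₀ hε] at this
      push_cast at this
      linarith
    -- As `v ∉ N w`, the path from `w` to `v` is longer than `i`.
    have him : i ≤ m := by
      have h1 := hNw v (by simp_all)
      have h2 := (hdt w v).2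
      rw [em] at h2
      have : (i : ℝ) < m := lt_of_mul_lt_mul_left (hi1.trans_le (h1.trans h2)) hε.le
      exact_mod_cast this.le
    obtain ⟨x, hwx, hxv⟩ := hm.split him
    have hx : x ∈ N w := by
      by_contra hx
      have h1 := hNw x hx
      have h2 := (hdt w x).2
      have h3 := mul_le_mul_of_nonneg_left (dR_le_of_hasWalk hwx) hε.le
      linarith
    have hy := dR_le_of_hasWalk hxv
    rw [Nat.cast_sub him, ← em] at hy
    refine lower_bound_arith hε0 hε1 ecc_nonneg hrE hi2 (y := dR Adj x v) ?_ ?_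
    · linarith [(hA w (by simp)).1, (hdt w v).1]
    · rw [ht]
      exact (hA x (by simp [hx])).2
  · rw [hecc2 v hv]
    refine Finset.sup'_le _ _ fun s _ => max_le ?_ (sub_le_iff_le_add.2 ?_)
    · have h1 := (hdt s v).2
      have h2 := dR_le_eccR Adj v s
      rw [comm v s] at h2
      nlinarith
    · refine Finset.sup'_le _ _ fun u _ => ?_
      have h1 := (hdt s u).2
      have h2 := dR_le_eccR Adj v s
      rw [comm v s] at h2
      have h3 := dR_le_eccR Adj v u
      have h4 := (hdt s v).1
      have h5 := mul_le_mul_of_nonneg_left (tri s v u) (by linarith : 0 ≤ 1 + ε)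
      nlinarith
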